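/- For all n ≥ k ≥ 1, a_{2n+1,k} = (n−k+1)·a_{2n,k−2} + (n+1)·a_{2n,k−1} + (k+1)·a_{2n,k}, where a_{m,k} counts permutations of [m] with k even descents and no odd descents (with a_{m,j} = 0 for j < 0). -/

import Mathlib

/-!
Let a descent at index `i` carry the weight `w i`. Keeping track of the last value of a permutation
gives the recursion `descentSum_succ` for the weighted count of permutations of `Fin n`.

For the weights `0, X, 0, X, …` it says that the exponential generating functions
`F = 1 + ∑_{n ≥ 1} X a_{2n} u^{2n} / (2n)!` and `G = ∑ a_{2n+1} u^{2n+1} / (2n+1)!` satisfy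
`F = 1 + X F Q` and `G = F Q'`, where `Q = (cosh (u √(1 - X)) - 1) / (1 - X)`. The derivation
`D = u ∂/∂u + 2 (1 - X) ∂/∂X` satisfies `D Q = 2 Q`, whence `D F = 2 F² Q`. On the other hand
`Q'' = 1 + (1 - X) Q` and `Q'² = 2 Q + (1 - X) Q²`, so that `2 G' = 2 F + (1 + X) D F`, which is the
recurrence after comparing coefficients.
-/

open Finset

/-- The set of (0-based) descent indices of a permutation of `Fin n`:
`i` is a descent index if `π i > π (i+1)` (so the 1-based descent position is `i+1`). -/
def descentSet {n : ℕ} (π : Equiv.Perm (Fin n)) : Finset ℕ :=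
  (Finset.range n).filter
    (fun i => ∃ h : i + 1 < n, π ⟨i + 1, h⟩ < π ⟨i, Nat.lt_of_succ_lt h⟩)

/-- The number of descents of `π`. -/
def des {n : ℕ} (π : Equiv.Perm (Fin n)) : ℕ := (descentSet π).card

/-- The number of descents of `π` at odd (1-based) positions, i.e. even 0-based indices. -/
def odes {n : ℕ} (π : Equiv.Perm (Fin n)) : ℕ :=
  ((descentSet π).filter (fun i => Even i)).card

/-- The number of descents of `π` at even (1-based) positions, i.e. odd 0-based indices. -/
def edes {n : ℕ} (π : Equiv.Perm (Fin n)) : ℕ :=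
  ((descentSet π).filter (fun i => Odd i)).card

/-- The refined Eulerian polynomial `A_n(p,q) = Σ_π p^{odes π} q^{edes π}`. -/
def refinedEulerian (n : ℕ) (p q : ℝ) : ℝ :=
  ∑ π : Equiv.Perm (Fin n), p ^ odes π * q ^ edes π

/-- The Eulerian polynomial `A_n(q) = Σ_π q^{des π}` as a function. -/
def eulerianEval (n : ℕ) (q : ℝ) : ℝ :=
  ∑ π : Equiv.Perm (Fin n), q ^ des π

/-- The Eulerian polynomial `A_n(q)` as a polynomial. -/
noncomputable def eulerianPolynomial (n : ℕ) : Polynomial ℝ :=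
  ∑ π : Equiv.Perm (Fin n), Polynomial.X ^ des π

/-- The Eulerian number `A_{n,k}`: the number of permutations of `[n]` with `k` descents. -/
def eulerianNumber (n k : ℕ) : ℕ :=
  (Finset.univ.filter (fun π : Equiv.Perm (Fin n) => des π = k)).card

/-- A permutation `a_1 a_2 … a_n` is alternating if `a_1 > a_2 < a_3 > ⋯`. -/
def IsAlternating {n : ℕ} (π : Equiv.Perm (Fin n)) : Prop :=
  ∀ i : ℕ, ∀ h : i + 1 < n,
    (π ⟨i + 1, h⟩ < π ⟨i, Nat.lt_of_succ_lt h⟩ ↔ Even i)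

open scoped Classical in
/-- The Euler number `E_n`: the number of alternating permutations of `[n]`. -/
noncomputable def eulerNumber (n : ℕ) : ℕ :=
  (Finset.univ.filter (fun π : Equiv.Perm (Fin n) => IsAlternating π)).card

/-- `a_{n,k}`: the number of permutations of `[n]` with `k` even descents and no odd descents. -/
def aNum (n k : ℕ) : ℕ :=
  (Finset.univ.filter (fun π : Equiv.Perm (Fin n) => edes π = k ∧ odes π = 0)).card

/-- `a_{m,k}` extended to integer index `k`, with value `0` for `k < 0`. -/
def aNumInt (m : ℕ) (k : ℤ) : ℕ := if 0 ≤ k then aNum m k.toNat else 0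

open Polynomial
open scoped Nat PowerSeries

section InsertLast

variable {n : ℕ}

/-- The permutation of `Fin (n + 1)` with last value `r` whose other values are in the same relative
order as those of `σ`: this is how permutations are built up by length. -/
def insertLast (σ : Equiv.Perm (Fin n)) (r : Fin (n + 1)) : Equiv.Perm (Fin (n + 1)) :=
  finSuccEquivLast.trans ((Equiv.optionCongr σ).trans (finSuccEquiv' r).symm)

@[simp]
lemma insertLast_last (σ : Equiv.Perm (Fin n)) (r : Fin (n + 1)) :
    insertLast σ r (Fin.last n) = r := by
  simp [insertLast]

@[simp]
lemma insertLast_castSucc (σ : Equiv.Perm (Fin n)) (r : Fin (n + 1)) (i : Fin n) :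
    insertLast σ r i.castSucc = r.succAbove (σ i) := by
  simp [insertLast]

lemma insertLast_bijective :
    Function.Bijective fun x : Fin (n + 1) × Equiv.Perm (Fin n) => insertLast x.2 x.1 := by
  refine (Fintype.bijective_iff_injective_and_card _).2 ⟨?_, ?_⟩
  · rintro ⟨r, σ⟩ ⟨s, τ⟩ (h : insertLast σ r = insertLast τ s)
    obtain rfl : r = s := by rw [← insertLast_last σ r, h, insertLast_last]
    have hστ : σ = τ := Equiv.ext fun i => Fin.succAbove_right_injective (p := r) <| by
      rw [← insertLast_castSucc, h, insertLast_castSucc]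
    rw [hστ]
  · simp [Fintype.card_perm, Nat.factorial_succ]

lemma sum_perm_succ {M : Type*} [AddCommMonoid M] (f : Equiv.Perm (Fin (n + 1)) → M) :
    ∑ π, f π = ∑ r, ∑ σ, f (insertLast σ r) := by
  rw [← insertLast_bijective.sum_comp, Fintype.sum_prod_type]

lemma mem_descentSet {π : Equiv.Perm (Fin n)} {i : ℕ} :
    i ∈ descentSet π ↔ ∃ h : i + 1 < n, π ⟨i + 1, h⟩ < π ⟨i, Nat.lt_of_succ_lt h⟩ := by
  simp only [descentSet, mem_filter, mem_range, and_iff_right_iff_imp]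
  rintro ⟨h, -⟩
  exact Nat.lt_of_succ_lt h

lemma notMem_descentSet_of_le {π : Equiv.Perm (Fin n)} {i : ℕ} (h : n ≤ i + 1) :
    i ∉ descentSet π := fun hi => (mem_descentSet.1 hi).1.not_ge h

lemma mem_descentSet_insertLast_self (σ : Equiv.Perm (Fin (n + 1))) (r : Fin (n + 2)) :
    n ∈ descentSet (insertLast σ r) ↔ r ≤ (σ (Fin.last n)).castSucc := by
  have h : insertLast σ r (Fin.last (n + 1)) < insertLast σ r (Fin.last n).castSucc ↔
      r ≤ (σ (Fin.last n)).castSucc := by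
    rw [insertLast_last, insertLast_castSucc, Fin.lt_succAbove_iff_le_castSucc]
  exact mem_descentSet.trans ⟨fun ⟨_, hlt⟩ => h.1 hlt, fun hle => ⟨by omega, h.2 hle⟩⟩

lemma mem_descentSet_insertLast_of_lt (σ : Equiv.Perm (Fin n)) (r : Fin (n + 1)) {i : ℕ}
    (hi : i + 1 < n) : i ∈ descentSet (insertLast σ r) ↔ i ∈ descentSet σ := by
  have h : insertLast σ r (Fin.castSucc ⟨i + 1, hi⟩) <
      insertLast σ r (Fin.castSucc ⟨i, Nat.lt_of_succ_lt hi⟩) ↔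
        σ ⟨i + 1, hi⟩ < σ ⟨i, Nat.lt_of_succ_lt hi⟩ := by
    rw [insertLast_castSucc, insertLast_castSucc, Fin.succAbove_lt_succAbove_iff]
  rw [mem_descentSet, mem_descentSet]
  exact ⟨fun ⟨_, hlt⟩ => ⟨hi, h.1 hlt⟩, fun ⟨_, hlt⟩ => ⟨by omega, h.2 hlt⟩⟩

lemma descentSet_insertLast (σ : Equiv.Perm (Fin (n + 1))) (r : Fin (n + 2)) :
    descentSet (insertLast σ r) =
      if r ≤ (σ (Fin.last n)).castSucc then insert n (descentSet σ) else descentSet σ := by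
  ext i
  rcases lt_trichotomy i n with hi | rfl | hi
  · rw [mem_descentSet_insertLast_of_lt σ r (by omega)]
    split_ifs <;> simp [hi.ne]
  · rw [mem_descentSet_insertLast_self]
    split_ifs with h <;> simp [h, notMem_descentSet_of_le]
  · have hσ : i ∉ descentSet σ := notMem_descentSet_of_le (by omega)
    have hins : i ∉ descentSet (insertLast σ r) := notMem_descentSet_of_le (by omega)
    split_ifs <;> simp [hσ, hins, hi.ne']

end InsertLast

section DescentSum

variable {R : Type*} [CommRing R] (w : ℕ → R)

/-- The weight of a permutation whose descent at the (0-based) index `i` has weight `w i`. -/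
def descentWeight {n : ℕ} (π : Equiv.Perm (Fin n)) : R := ∏ i ∈ descentSet π, w i

/-- The count of the permutations of `Fin n`, weighted by their descents; for a constant weight
this is the Eulerian polynomial. -/
def descentSum (n : ℕ) : R := ∑ π : Equiv.Perm (Fin n), descentWeight w π

/-- The part of `descentSum w (n + 1)` that comes from the permutations with last value `r`. -/
def descentSumLast {n : ℕ} (r : Fin (n + 1)) : R :=
  ∑ σ : Equiv.Perm (Fin n), descentWeight w (insertLast σ r)

/-- `descentSum w n` for permutations followed by a forced descent, to be paid for unless the
permutation is empty. -/
def closedDescentSum : ℕ → R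
  | 0 => 1
  | n + 1 => w n * descentSum w (n + 1)

lemma descentWeight_insertLast {n : ℕ} (σ : Equiv.Perm (Fin (n + 1))) (r : Fin (n + 2)) :
    descentWeight w (insertLast σ r) =
      (if r ≤ (σ (Fin.last n)).castSucc then w n else 1) * descentWeight w σ := by
  rw [descentWeight, descentSet_insertLast]
  split_ifs
  · exact prod_insert (notMem_descentSet_of_le le_rfl)
  · exact (one_mul _).symm

lemma descentSum_succ_eq_sum_last (n : ℕ) :
    descentSum w (n + 1) = ∑ r : Fin (n + 1), descentSumLast w r :=
  sum_perm_succ _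

lemma descentSumLast_succ {n : ℕ} (r : Fin (n + 2)) :
    descentSumLast w r = w n * descentSum w (n + 1) +
      (1 - w n) * ∑ s : Fin (n + 1), if (s : ℕ) < r then descentSumLast w s else 0 := by
  rw [descentSum_succ_eq_sum_last, mul_sum, mul_sum, ← sum_add_distrib, descentSumLast,
    sum_perm_succ]
  refine sum_congr rfl fun s _ => ?_
  simp only [descentWeight_insertLast w (insertLast _ s), insertLast_last, ← mul_sum]
  rw [← descentSumLast]
  simp only [Fin.le_def, Fin.val_castSucc, ← not_lt (b := (r : ℕ)), ite_not]
  split_ifs <;> ring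

lemma sum_range_choose_eq_choose_succ (m k : ℕ) :
    ∑ s ∈ range m, s.choose k = m.choose (k + 1) := by
  induction m with
  | zero => simp
  | succ m ih => rw [sum_range_succ, ih, Nat.choose_succ_succ, add_comm]

lemma sum_fin_ite_lt_choose {n r : ℕ} (hr : r ≤ n) (k : ℕ) :
    (∑ s : Fin n, if (s : ℕ) < r then ((s : ℕ).choose k : R) else 0) = r.choose (k + 1) := by
  rw [Fin.sum_univ_eq_sum_range (fun s => if s < r then (s.choose k : R) else 0), ← sum_filter,
    ← sum_range_choose_eq_choose_succ, Nat.cast_sum]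
  congr 1
  ext s
  simp only [mem_filter, mem_range]
  omega

-- Expand the weight at each index `i` as `w i + (1 - w i) * [ascent at i]`. The `j`-th term
-- collects the choices with last `w i` at `i = j - 1`: the values from the 0-based position `j` on
-- increase to `r`, and `n - j` of them are free below `r`.
lemma descentSumLast_eq_sum {n : ℕ} (r : Fin (n + 1)) :
    descentSumLast w r = ∑ j ∈ range (n + 1),
      closedDescentSum w j * (∏ i ∈ Ico j n, (1 - w i)) * ((r : ℕ).choose (n - j) : R) := by
  induction n with
  | zero =>
    have h : descentSet (insertLast 1 r) = ∅ :=
      eq_empty_of_forall_notMem fun i => notMem_descentSet_of_le (by omega)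
    simp [descentSumLast, descentWeight, closedDescentSum, h]
  | succ n ih =>
    have hr : (r : ℕ) ≤ n + 1 := Nat.lt_succ_iff.1 r.2
    have hlt : (∑ s : Fin (n + 1), if (s : ℕ) < r then descentSumLast w s else 0) =
        ∑ j ∈ range (n + 1), closedDescentSum w j * (∏ i ∈ Ico j n, (1 - w i)) *
          ((r : ℕ).choose (n - j + 1) : R) := by
      simp only [ih, ← sum_fin_ite_lt_choose hr, mul_sum, mul_ite, mul_zero]
      rw [sum_comm]
      exact sum_congr rfl fun s _ => by split_ifs <;> simp
    rw [descentSumLast_succ, hlt, sum_range_succ _ (n + 1), add_comm, mul_sum]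
    congr 1
    · refine sum_congr rfl fun j hj => ?_
      have hj : j ≤ n := Nat.lt_succ_iff.1 (mem_range.1 hj)
      rw [prod_Ico_succ_top hj, Nat.sub_add_comm hj]
      ring
    · simp [closedDescentSum]

theorem descentSum_succ (n : ℕ) :
    descentSum w (n + 1) = ∑ j ∈ range (n + 1),
      ((n + 1).choose j : R) * closedDescentSum w j * ∏ i ∈ Ico j n, (1 - w i) := by
  simp only [descentSum_succ_eq_sum_last, descentSumLast_eq_sum]
  rw [sum_comm]
  refine sum_congr rfl fun j hj => ?_
  have hj : j ≤ n := Nat.lt_succ_iff.1 (mem_range.1 hj)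
  rw [← mul_sum, Fin.sum_univ_eq_sum_range (fun r => (r.choose (n - j) : R)), ← Nat.cast_sum,
    sum_range_choose_eq_choose_succ, ← Nat.sub_add_comm hj, Nat.choose_symm (by omega)]
  ring

end DescentSum

section ExpGenFun

variable {R : Type*} [CommRing R] [Algebra ℚ R]

/-- The exponential generating function `∑ aₙ uⁿ / n!` of a sequence. -/
noncomputable def expGenFun (a : ℕ → R) : R⟦X⟧ := PowerSeries.mk fun n => (n ! : ℚ)⁻¹ • a n

@[simp]
lemma coeff_expGenFun (a : ℕ → R) (n : ℕ) :
    PowerSeries.coeff n (expGenFun a) = (n ! : ℚ)⁻¹ • a n :=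
  PowerSeries.coeff_mk _ _

lemma expGenFun_mul (a b : ℕ → R) :
    expGenFun a * expGenFun b =
      expGenFun fun n => ∑ p ∈ antidiagonal n, (n.choose p.1 : R) * a p.1 * b p.2 := by
  ext n
  rw [PowerSeries.coeff_mul, coeff_expGenFun, smul_sum]
  refine sum_congr rfl fun p hp => ?_
  obtain rfl := mem_antidiagonal.1 hp
  have hchoose : (((p.1 + p.2) ! : ℚ)⁻¹ * (p.1 + p.2).choose p.1) =
      (p.1 ! : ℚ)⁻¹ * (p.2 ! : ℚ)⁻¹ := by
    rw [Nat.cast_add_choose]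
    field_simp
  rw [coeff_expGenFun, coeff_expGenFun, smul_mul_smul_comm, ← hchoose, mul_assoc, mul_smul,
    Nat.cast_smul_eq_nsmul, nsmul_eq_mul]

lemma derivative_expGenFun (a : ℕ → R) :
    d⁄dX R (expGenFun a) = expGenFun fun n => a (n + 1) := by
  ext n
  have hfact : ((n + 1)! : ℚ)⁻¹ * (n + 1) = (n ! : ℚ)⁻¹ := by
    rw [Nat.factorial_succ]
    push_cast
    field_simp
  rw [PowerSeries.coeff_derivative, coeff_expGenFun, coeff_expGenFun, ← hfact]
  simp only [Algebra.smul_def, map_mul, map_add, map_natCast, map_one]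
  ring

end ExpGenFun

section EulerDerivation

variable {S R : Type*} [CommRing S] [CommRing R] [Algebra S R]

/-- The derivation `u ∂/∂u + d` of `R⟦u⟧`, where the derivation `d` of `R` acts on coefficients. -/
noncomputable def eulerDerivation (d : Derivation S R R) : Derivation S R⟦X⟧ R⟦X⟧ :=
  Derivation.mk'
    { toFun f := PowerSeries.mk fun n => n * PowerSeries.coeff n f + d (PowerSeries.coeff n f)
      map_add' f g := by
        ext n
        simp only [PowerSeries.coeff_mk, map_add]
        ring
      map_smul' c f := by
        ext n
        simp }
    fun f g => by
      ext n
      simp only [LinearMap.coe_mk, AddHom.coe_mk, smul_eq_mul, map_add, PowerSeries.coeff_mk,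
        mul_comm g, PowerSeries.coeff_mul, map_sum, mul_sum, ← sum_add_distrib,
        Derivation.leibniz]
      refine sum_congr rfl fun p hp => ?_
      rw [← mem_antidiagonal.1 hp]
      push_cast
      ring

@[simp]
lemma coeff_eulerDerivation (d : Derivation S R R) (f : R⟦X⟧) (n : ℕ) :
    PowerSeries.coeff n (eulerDerivation d f) =
      n * PowerSeries.coeff n f + d (PowerSeries.coeff n f) := by
  simp [eulerDerivation]

lemma eulerDerivation_C (d : Derivation S R R) (r : R) :
    eulerDerivation d (PowerSeries.C r) = PowerSeries.C (d r) := by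
  ext n
  rw [coeff_eulerDerivation, PowerSeries.coeff_C, PowerSeries.coeff_C]
  split_ifs with h <;> simp [h]

lemma eulerDerivation_expGenFun [Algebra ℚ R] (d : Derivation ℚ R R) (a : ℕ → R) :
    eulerDerivation d (expGenFun a) = expGenFun fun n => n * a n + d (a n) := by
  ext n
  rw [coeff_eulerDerivation, coeff_expGenFun, coeff_expGenFun, d.map_smul, smul_add, mul_smul_comm]

end EulerDerivation

/-- The weight selecting permutations without odd descents and counting even descents. The index of
a descent is 0-based, so the even positions are the odd indices. -/
noncomputable def evenDescentVar (i : ℕ) : ℚ[X] := if Even i then 0 else X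

/-- The generating polynomial `∑ₖ a_{n,k} Xᵏ`. -/
noncomputable def evenDescentPoly (n : ℕ) : ℚ[X] := descentSum evenDescentVar n

lemma descentWeight_evenDescentVar {n : ℕ} (π : Equiv.Perm (Fin n)) :
    descentWeight evenDescentVar π = 0 ^ odes π * X ^ edes π := by
  simp only [descentWeight, evenDescentVar, prod_ite, prod_const, Nat.not_even_iff_odd]
  rfl

lemma coeff_evenDescentPoly (n k : ℕ) : (evenDescentPoly n).coeff k = aNum n k := by
  simp only [evenDescentPoly, descentSum, descentWeight_evenDescentVar, finsetSum_coeff, aNum,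
    card_filter, Nat.cast_sum]
  refine sum_congr rfl fun π _ => ?_
  by_cases h : odes π = 0
  · simp [h, coeff_X_pow, eq_comm]
  · simp [h]

lemma aNumInt_natCast (m k : ℕ) : aNumInt m k = aNum m k := by
  simp [aNumInt]

lemma coeff_X_mul_evenDescentPoly (n k : ℕ) :
    (X * evenDescentPoly n).coeff k = (aNumInt n ((k : ℤ) - 1) : ℚ) := by
  cases k with
  | zero => simp [aNumInt]
  | succ k => simp [aNumInt, coeff_evenDescentPoly]

lemma closedDescentSum_evenDescentVar {j : ℕ} (hj : j ≠ 0) :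
    closedDescentSum evenDescentVar j = if Even j then X * evenDescentPoly j else 0 := by
  obtain ⟨i, rfl⟩ := Nat.exists_eq_succ_of_ne_zero hj
  by_cases hi : Even i <;>
    simp [closedDescentSum, evenDescentVar, evenDescentPoly, Nat.even_add_one, hi]

lemma closedDescentSum_evenDescentVar_of_odd {j : ℕ} (hj : Odd j) :
    closedDescentSum evenDescentVar j = 0 := by
  rw [closedDescentSum_evenDescentVar hj.pos.ne', if_neg (Nat.not_even_iff_odd.2 hj)]

lemma prod_Ico_one_sub_evenDescentVar {j : ℕ} (hj : Even j) (m : ℕ) :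
    ∏ i ∈ Ico j (j + m), (1 - evenDescentVar i) = (1 - X) ^ (m / 2) := by
  induction m with
  | zero => simp
  | succ m ih =>
    rw [← add_assoc, prod_Ico_succ_top (by omega), ih, evenDescentVar]
    rcases Nat.even_or_odd m with hm | hm
    · rw [if_pos (hj.add hm), sub_zero, mul_one, Nat.succ_div_of_not_dvd]
      exact fun h => Nat.not_even_iff_odd.2 hm.add_one (even_iff_two_dvd.2 h)
    · rw [if_neg (Nat.not_even_iff_odd.2 (hj.add_odd hm)), ← pow_succ,
        Nat.succ_div_of_dvd hm.add_one.two_dvd]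

/-- The weight in `descentSum_succ` of a final increasing run of length `m` that starts after an
even number of values, for the weights `evenDescentVar`. -/
noncomputable def runWeight (m : ℕ) : ℚ[X] := if m = 0 then 0 else (1 - X) ^ ((m - 1) / 2)

lemma evenDescentPoly_eq_sum_antidiagonal {n : ℕ} (hn : n ≠ 0) :
    evenDescentPoly n = ∑ p ∈ antidiagonal n,
      (n.choose p.1 : ℚ[X]) * closedDescentSum evenDescentVar p.1 * runWeight p.2 := by
  obtain ⟨n, rfl⟩ := Nat.exists_eq_succ_of_ne_zero hn
  rw [Nat.sum_antidiagonal_eq_sum_range_succ_mk, sum_range_succ, Nat.sub_self, runWeight,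
    if_pos rfl, mul_zero, add_zero, evenDescentPoly, descentSum_succ]
  refine sum_congr rfl fun j hj => ?_
  have hj : j ≤ n := Nat.lt_succ_iff.1 (mem_range.1 hj)
  rcases Nat.even_or_odd j with he | ho
  · obtain ⟨m, rfl⟩ := Nat.exists_eq_add_of_le hj
    rw [prod_Ico_one_sub_evenDescentVar he, runWeight, if_neg (by omega),
      show (j + m).succ - j - 1 = m by omega]
  · simp [closedDescentSum_evenDescentVar_of_odd ho]

/-- The restriction of `runWeight` to runs of even length. -/
noncomputable def evenRunWeight (m : ℕ) : ℚ[X] := if Even m then runWeight m else 0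

lemma evenRunWeight_two_mul_add_two (i : ℕ) : evenRunWeight (2 * i + 2) = (1 - X) ^ i := by
  rw [evenRunWeight, if_pos (by simp [parity_simps]), runWeight, if_neg (by omega),
    show (2 * i + 2 - 1) / 2 = i by omega]

lemma evenRunWeight_two_mul_add_one (i : ℕ) : evenRunWeight (2 * i + 1) = 0 :=
  if_neg (by simp)

@[simp]
lemma evenRunWeight_zero : evenRunWeight 0 = 0 := by
  simp [evenRunWeight, runWeight]

lemma evenRunWeight_succ (m : ℕ) :
    evenRunWeight (m + 1) = if Even (m + 1) then runWeight m else 0 := by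
  rcases Nat.even_or_odd' m with ⟨i, rfl | rfl⟩
  · rw [evenRunWeight_two_mul_add_one, if_neg (by simp)]
  · rw [evenRunWeight_two_mul_add_two, if_pos (by simp [parity_simps]), runWeight,
      if_neg (by omega), show (2 * i + 1 - 1) / 2 = i by omega]

lemma evenRunWeight_add_two (m : ℕ) :
    evenRunWeight (m + 2) = (if m = 0 then 1 else 0) + (1 - X) * evenRunWeight m := by
  rcases Nat.even_or_odd' m with ⟨i, rfl | rfl⟩
  · rw [evenRunWeight_two_mul_add_two]
    cases i with
    | zero => simp
    | succ i =>
      rw [if_neg (by omega), zero_add, mul_add_one, evenRunWeight_two_mul_add_two, pow_succ']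
  · rw [show 2 * i + 1 + 2 = 2 * (i + 1) + 1 by ring, evenRunWeight_two_mul_add_one,
      evenRunWeight_two_mul_add_one, if_neg (by omega), mul_zero, add_zero]

lemma natCast_mul_evenRunWeight_add_derivative (m : ℕ) :
    (m : ℚ[X]) * evenRunWeight m + 2 * (1 - X) * derivative (evenRunWeight m) =
      2 * evenRunWeight m := by
  rcases Nat.even_or_odd' m with ⟨i, rfl | rfl⟩
  · obtain _ | _ | i := i
    · simp
    · simp [evenRunWeight_two_mul_add_two 0]
    · rw [show 2 * (i + 1 + 1) = 2 * (i + 1) + 2 by ring, evenRunWeight_two_mul_add_two,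
        derivative_pow_succ]
      simp only [map_add, map_natCast, map_one, derivative_sub, derivative_one, derivative_X]
      push_cast
      ring
  · simp [evenRunWeight_two_mul_add_one]

lemma sum_antidiagonal_closedDescentSum_mul_ite (b : ℕ → ℚ[X]) (n s : ℕ) :
    (∑ p ∈ antidiagonal n, (n.choose p.1 : ℚ[X]) * closedDescentSum evenDescentVar p.1 *
        if Even (p.2 + s) then b p.2 else 0) =
      if Even (n + s) then
        ∑ p ∈ antidiagonal n, (n.choose p.1 : ℚ[X]) * closedDescentSum evenDescentVar p.1 * b p.2
      else 0 := by
  have hterm : ∀ p ∈ antidiagonal n,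
      (closedDescentSum evenDescentVar p.1 * if Even (p.2 + s) then b p.2 else 0) =
        if Even (n + s) then closedDescentSum evenDescentVar p.1 * b p.2 else 0 := by
    intro p hp
    obtain rfl := mem_antidiagonal.1 hp
    rcases Nat.even_or_odd p.1 with he | ho
    · simp only [add_assoc, Nat.even_add.trans (iff_true_left he), mul_ite, mul_zero]
    · simp [closedDescentSum_evenDescentVar_of_odd ho]
  simp only [mul_assoc, sum_congr rfl fun p hp => congrArg _ (hterm p hp)]
  split_ifs <;> simp

/-- The exponential generating function of `1, 0, X a_2, 0, X a_4, …`, called `F` in the header. -/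
noncomputable def evenSeries : ℚ[X]⟦X⟧ := expGenFun (closedDescentSum evenDescentVar)

/-- The series `(cosh (u √(1 - X)) - 1) / (1 - X)`, called `Q` in the header. -/
noncomputable def evenRunSeries : ℚ[X]⟦X⟧ := expGenFun evenRunWeight

lemma evenSeries_eq_one_add :
    evenSeries = 1 + evenSeries * (PowerSeries.C X * evenRunSeries) := by
  rw [mul_left_comm, evenSeries, evenRunSeries, expGenFun_mul]
  ext1 n
  simp only [map_add, PowerSeries.coeff_C_mul, PowerSeries.coeff_one, coeff_expGenFun]
  rcases eq_or_ne n 0 with rfl | hn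
  · simp [closedDescentSum]
  · have h := sum_antidiagonal_closedDescentSum_mul_ite runWeight n 0
    rw [← evenDescentPoly_eq_sum_antidiagonal hn] at h
    rw [if_neg hn, zero_add, mul_smul_comm, closedDescentSum_evenDescentVar hn, ← mul_ite_zero]
    exact congrArg (fun q => (n ! : ℚ)⁻¹ • (X * q)) h.symm

lemma evenSeries_mul_derivative_evenRunSeries :
    evenSeries * d⁄dX ℚ[X] evenRunSeries =
      expGenFun fun n => if Even (n + 1) then evenDescentPoly n else 0 := by
  rw [evenSeries, evenRunSeries, derivative_expGenFun, expGenFun_mul]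
  refine congrArg expGenFun (funext fun n => ?_)
  simp only [evenRunWeight_succ, sum_antidiagonal_closedDescentSum_mul_ite]
  rcases eq_or_ne n 0 with rfl | hn
  · simp
  · rw [← evenDescentPoly_eq_sum_antidiagonal hn]

lemma derivative_derivative_evenRunSeries :
    d⁄dX ℚ[X] (d⁄dX ℚ[X] evenRunSeries) = 1 + PowerSeries.C (1 - X) * evenRunSeries := by
  ext1 n
  rw [evenRunSeries, derivative_expGenFun, derivative_expGenFun]
  simp only [coeff_expGenFun, map_add, PowerSeries.coeff_C_mul, PowerSeries.coeff_one,
    evenRunWeight_add_two]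
  split_ifs with h <;> simp [h]

lemma derivative_evenRunSeries_sq :
    (d⁄dX ℚ[X] evenRunSeries) ^ 2 =
      2 * evenRunSeries + PowerSeries.C (1 - X) * evenRunSeries ^ 2 := by
  apply PowerSeries.derivative.ext
  · rw [two_mul]
    simp only [map_add, Derivation.leibniz, Derivation.leibniz_pow, PowerSeries.derivative_C,
      smul_eq_mul, nsmul_eq_mul]
    push_cast
    linear_combination 2 * d⁄dX ℚ[X] evenRunSeries * derivative_derivative_evenRunSeries
  · have h₀ : PowerSeries.constantCoeff evenRunSeries = 0 := by
      rw [← PowerSeries.coeff_zero_eq_constantCoeff_apply, evenRunSeries, coeff_expGenFun,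
        evenRunWeight_zero, smul_zero]
    have h₁ : PowerSeries.constantCoeff (d⁄dX ℚ[X] evenRunSeries) = 0 := by
      rw [← PowerSeries.coeff_zero_eq_constantCoeff_apply, evenRunSeries, derivative_expGenFun,
        coeff_expGenFun, evenRunWeight_two_mul_add_one 0, smul_zero]
    simp [h₀, h₁]

/-- The derivation `u ∂/∂u + 2 (1 - X) ∂/∂X` of `ℚ[X]⟦u⟧`, called `D` in the header. -/
noncomputable def scalingDerivation : Derivation ℚ ℚ[X]⟦X⟧ ℚ[X]⟦X⟧ :=
  eulerDerivation ((2 * (1 - X) : ℚ[X]) • derivative')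

lemma scalingDerivation_evenRunSeries :
    scalingDerivation evenRunSeries = 2 * evenRunSeries := by
  rw [scalingDerivation, evenRunSeries, eulerDerivation_expGenFun, ← map_ofNat PowerSeries.C 2]
  ext1 n
  rw [PowerSeries.coeff_C_mul, coeff_expGenFun, coeff_expGenFun, mul_smul_comm]
  exact congrArg _ (natCast_mul_evenRunWeight_add_derivative n)

-- The algebra structure is found by unification, as instance search over `ℚ[X]` returns
-- `PowerSeries.algebraPolynomial`, which is not the one that `d⁄dX ℚ[X]` is linear for.
lemma derivation_eq_sq_mul_of_eq_one_add_mul {S A : Type*} [CommRing S] [CommRing A]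
    {_ : Algebra S A} (D : Derivation S A A) {f h : A} (hf : f = 1 + f * h) :
    D f = f ^ 2 * D h := by
  have hinv : f * (1 - h) = 1 := by linear_combination hf
  simpa using D.leibniz_of_mul_eq_one hinv

lemma derivative_evenSeries :
    d⁄dX ℚ[X] evenSeries = PowerSeries.C X * evenSeries ^ 2 * d⁄dX ℚ[X] evenRunSeries := by
  rw [derivation_eq_sq_mul_of_eq_one_add_mul _ evenSeries_eq_one_add]
  simp only [Derivation.leibniz, PowerSeries.derivative_C, smul_eq_mul]
  ring

lemma scalingDerivation_evenSeries :
    scalingDerivation evenSeries = 2 * evenSeries ^ 2 * evenRunSeries := by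
  have hX : scalingDerivation (PowerSeries.C X) = 2 * (1 - PowerSeries.C X) := by
    simp [scalingDerivation, eulerDerivation_C, map_ofNat]
  rw [derivation_eq_sq_mul_of_eq_one_add_mul _ evenSeries_eq_one_add, Derivation.leibniz, hX,
    scalingDerivation_evenRunSeries, smul_eq_mul, smul_eq_mul]
  ring

lemma two_mul_derivative_evenSeries_mul :
    2 * d⁄dX ℚ[X] (evenSeries * d⁄dX ℚ[X] evenRunSeries) =
      2 * evenSeries + PowerSeries.C (1 + X) * scalingDerivation evenSeries := by
  have hF := evenSeries_eq_one_add
  have hQ := derivative_evenRunSeries_sq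
  simp only [Derivation.leibniz, derivative_derivative_evenRunSeries, derivative_evenSeries,
    scalingDerivation_evenSeries, smul_eq_mul, map_add, map_sub, map_one] at hQ ⊢
  linear_combination 2 * PowerSeries.C X * evenSeries ^ 2 * hQ -
    2 * (1 - PowerSeries.C X) * evenSeries * evenRunSeries * hF

theorem evenDescentPoly_two_mul_add_one {n : ℕ} (hn : n ≠ 0) :
    evenDescentPoly (2 * n + 1) = ((n + 1 : ℕ) : ℚ[X]) * (X * evenDescentPoly (2 * n)) +
      X * ((n : ℚ[X]) * (X * evenDescentPoly (2 * n))) +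
        (1 - X ^ 2) * derivative (X * evenDescentPoly (2 * n)) := by
  have h := congrArg (PowerSeries.coeff (2 * n)) two_mul_derivative_evenSeries_mul
  rw [evenSeries_mul_derivative_evenRunSeries, derivative_expGenFun, scalingDerivation, evenSeries,
    eulerDerivation_expGenFun, ← map_ofNat PowerSeries.C 2] at h
  simp only [LinearMap.map_add, PowerSeries.coeff_C_mul, coeff_expGenFun, mul_smul_comm, ← smul_add,
    closedDescentSum_evenDescentVar (mul_ne_zero two_ne_zero hn), even_two_mul, Nat.even_add_one,
    not_not, if_true, Derivation.smul_apply, derivative'_apply, smul_eq_mul] at h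
  have hcancel :=
    smul_right_injective _ (inv_ne_zero (Nat.cast_ne_zero.2 (Nat.factorial_ne_zero (2 * n)))) h
  refine mul_left_cancel₀ (two_ne_zero' ℚ[X]) ?_
  push_cast at hcancel ⊢
  linear_combination hcancel

lemma coeff_one_sub_X_sq_mul_derivative_succ {R : Type*} [CommRing R] (p : R[X]) (k : ℕ) :
    ((1 - X ^ 2) * derivative p).coeff (k + 1) = (k + 2) * p.coeff (k + 2) - k * p.coeff k := by
  rw [sub_mul, one_mul, pow_two, mul_assoc, coeff_sub, coeff_X_mul, coeff_derivative]
  cases k with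
  | zero =>
    rw [mul_coeff_zero, coeff_X_zero]
    push_cast
    ring
  | succ k =>
    rw [coeff_X_mul, coeff_derivative]
    push_cast
    ring

/-- a_{2n+1,k} = (n−k+1) a_{2n,k−2} + (n+1) a_{2n,k−1} + (k+1) a_{2n,k},
with a_{m,j} = 0 for j < 0. -/
theorem aNum_odd_rec (n k : ℕ) (h1 : 1 ≤ k) (h2 : k ≤ n) :
    aNum (2 * n + 1) k =
      (n - k + 1) * aNumInt (2 * n) ((k : ℤ) - 2) +
        (n + 1) * aNumInt (2 * n) ((k : ℤ) - 1) + (k + 1) * aNum (2 * n) k := by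
  obtain ⟨k, rfl⟩ := Nat.exists_eq_add_of_le' h1
  have h := congrArg (coeff · (k + 1)) (evenDescentPoly_two_mul_add_one (n := n) (by omega))
  simp only [coeff_add, coeff_natCast_mul, coeff_one_sub_X_sq_mul_derivative_succ, coeff_X_mul,
    coeff_X_mul_evenDescentPoly, coeff_evenDescentPoly] at h
  have hindex₁ : ((k + 1 : ℕ) : ℤ) - 1 = k := by push_cast; ring
  have hindex₂ : ((k + 1 : ℕ) : ℤ) - 2 = k - 1 := by push_cast; ring
  rw [hindex₁, hindex₂, aNumInt_natCast, ← Nat.cast_inj (R := ℚ)]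
  push_cast [Nat.cast_sub h2] at h ⊢
  linear_combination h
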